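/- For every real damping parameter ω, the supremum over θ ∈ T^H of |1 - ω·g_v(θ)| is at least 7/25, and this supremum equals 7/25 if and only if ω = 24/25. In other words, the optimal LFA smoothing factor of the element-wise Vanka relaxation for the five-point Laplacian is 7/25, uniquely attained at ω = 24/25. -/

import Mathlib

open Real Set

/-- The high-frequency set `T^H`. -/
def TH : Set (ℝ × ℝ) :=
  (Ioc (-(π/2)) (3*π/2) ×ˢ Ioc (-(π/2)) (3*π/2)) \
    (Ioc (-(π/2)) (π/2) ×ˢ Ioc (-(π/2)) (π/2))

/-- Scaled symbol of the five-point discrete Laplacian. -/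
noncomputable def chi (θ : ℝ × ℝ) : ℝ := 4 - 2 * Real.cos θ.1 - 2 * Real.cos θ.2

/-- Scaled symbol of the product of the element-wise Vanka operator and the discrete Laplacian. -/
noncomputable def gv (θ : ℝ × ℝ) : ℝ :=
  chi θ * (7 + 2 * Real.cos θ.1 + 2 * Real.cos θ.2 + Real.cos θ.1 * Real.cos θ.2) / 24

lemma poly_bounds (x y : ℝ) (hx : -1 ≤ x) (hx' : x ≤ 1) (hy : -1 ≤ y) (hy' : y ≤ 0) :
    18 ≤ (4 - 2 * x - 2 * y) * (7 + 2 * x + 2 * y + x * y) ∧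
      (4 - 2 * x - 2 * y) * (7 + 2 * x + 2 * y + x * y) ≤ 32 := by
  constructor
  · have h1 : 0 ≤ (1 - x) * (1 + x) * (2 * (2 + y)) :=
      mul_nonneg (mul_nonneg (by linarith) (by linarith)) (by linarith)
    have h2 : 0 ≤ (1 + x) * (-12 * y - 6 * y ^ 2) :=
      mul_nonneg (by linarith) (by nlinarith)
    have h3 : 0 ≤ (1 - x) * (12 - 4 * y - 2 * y ^ 2) :=
      mul_nonneg (by linarith) (by nlinarith)
    nlinarith
  · have h1 : 0 ≤ (4 - 2 * x - 2 * y) * (x - y) ^ 2 :=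
      mul_nonneg (by linarith) (sq_nonneg _)
    have h2 : 0 ≤ (2 + x + y) ^ 3 := pow_nonneg (by linarith) 3
    nlinarith

lemma gv_bounds (θ : ℝ × ℝ) (h : θ ∈ TH) : 3/4 ≤ gv θ ∧ gv θ ≤ 4/3 := by
  obtain ⟨⟨⟨a1, a2⟩, ⟨b1, b2⟩⟩, hn⟩ := h
  have hc1 := Real.neg_one_le_cos θ.1
  have hc2 := Real.neg_one_le_cos θ.2
  have hd1 := Real.cos_le_one θ.1
  have hd2 := Real.cos_le_one θ.2
  unfold gv chi
  by_cases h1 : θ.1 ≤ π/2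
  · have h2 : π/2 < θ.2 := by
      by_contra h2
      exact hn ⟨⟨a1, h1⟩, ⟨b1, not_lt.mp h2⟩⟩
    have hc : Real.cos θ.2 ≤ 0 :=
      Real.cos_nonpos_of_pi_div_two_le_of_le h2.le (by linarith)
    obtain ⟨p, q⟩ := poly_bounds _ _ hc1 hd1 hc2 hc
    constructor <;> linarith
  · have hc : Real.cos θ.1 ≤ 0 :=
      Real.cos_nonpos_of_pi_div_two_le_of_le (not_le.mp h1).le (by linarith)
    obtain ⟨p, q⟩ := poly_bounds _ _ hc2 hd2 hc1 hc
    constructor <;> linarith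

lemma mem_pi : ((π, π) : ℝ × ℝ) ∈ TH := by
  have := Real.pi_pos
  refine ⟨⟨⟨?_, ?_⟩, ⟨?_, ?_⟩⟩, fun h => ?_⟩
  any_goals (simp only; linarith)
  have := h.1.2
  simp only at this
  linarith

lemma mem_zero : ((0, 3*π/2) : ℝ × ℝ) ∈ TH := by
  have := Real.pi_pos
  refine ⟨⟨⟨?_, ?_⟩, ⟨?_, ?_⟩⟩, fun h => ?_⟩
  any_goals (simp only; linarith)
  have := h.2.2
  simp only at this
  linarith

lemma gv_pi : gv (π, π) = 4/3 := by
  simp only [gv, chi, Real.cos_pi]; norm_num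

lemma gv_zero : gv (0, 3*π/2) = 3/4 := by
  have h : Real.cos (3*π/2) = 0 := by
    rw [show 3*π/2 = π/2 + π by ring, Real.cos_add_pi, Real.cos_pi_div_two, neg_zero]
  simp only [gv, chi, Real.cos_zero, h]; norm_num

theorem stmt_5 (ω : ℝ) :
    7/25 ≤ sSup ((fun θ => |1 - ω * gv θ|) '' TH) ∧
      (sSup ((fun θ => |1 - ω * gv θ|) '' TH) = 7/25 ↔ ω = 24/25) := by
  have hb : BddAbove ((fun θ => |1 - ω * gv θ|) '' TH) := by
    refine ⟨1 + |ω| * (4/3), ?_⟩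
    rintro _ ⟨θ, hθ, rfl⟩
    obtain ⟨p, q⟩ := gv_bounds θ hθ
    have h1 : |ω * gv θ| ≤ |ω| * (4/3) := by
      rw [abs_mul, abs_of_nonneg (by linarith : 0 ≤ gv θ)]
      exact mul_le_mul_of_nonneg_left q (abs_nonneg _)
    have h2 := abs_sub (1 : ℝ) (ω * gv θ)
    rw [abs_one] at h2
    simp only
    linarith
  have h1 : |1 - ω * (4/3)| ≤ sSup ((fun θ => |1 - ω * gv θ|) '' TH) :=
    le_csSup hb ⟨_, mem_pi, by simp only [gv_pi]⟩
  have h2 : |1 - ω * (3/4)| ≤ sSup ((fun θ => |1 - ω * gv θ|) '' TH) :=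
    le_csSup hb ⟨_, mem_zero, by simp only [gv_zero]⟩
  have h3 := (neg_le_abs _).trans h1
  have h4 := (le_abs_self _).trans h2
  have h5 : 7/25 ≤ sSup ((fun θ => |1 - ω * gv θ|) '' TH) := by linarith
  refine ⟨h5, fun h => ?_, fun h => le_antisymm ?_ h5⟩
  · rw [h] at h3 h4
    linarith
  · refine csSup_le (Set.Nonempty.image _ ⟨_, mem_pi⟩) ?_
    rintro _ ⟨θ, hθ, rfl⟩
    obtain ⟨p, q⟩ := gv_bounds θ hθ
    subst h
    simp only
    rw [abs_le]
    constructor <;> linarith
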